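/- arXiv:2208.14786 — 5 statements merged into one kernel-verified Lean document; each statement's English description precedes it below -/
import Mathlib

section
/- The function θ₁ defined by θ₁(δ) = 𝓖(2+δ; δ) is increasing (non-decreasing) on the interval (0, 2]. -/
/-!
For `0 < h ≤ 1/2` the integrand `(2 + δ) * h ^ (δ - 1) / (1 - h)` is already non-increasing in `δ`:
the logarithmic derivative of `(2 + δ) * h ^ δ` is `1 / (2 + δ) + log h ≤ 1 / 2 - log 2 < 0`.
The upper limit `x / (1 + x)` is at most `1/2` for `x ∈ [0, 1]`, so `(2 + δ) * Fcal x δ` is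
non-increasing in `δ`. Hence the set `{x ∈ [0, 1] | Fcal x δ ≤ 1 / (2 + δ)}` grows with `δ`, and so
does its supremum `theta1 δ`.
-/

open MeasureTheory

/-- `𝓕(x;κ) = ∫₀^{x/(1+x)} h^{κ-1}/(1-h) dh`. -/
noncomputable def Fcal (x κ : ℝ) : ℝ := ∫ h in (0:ℝ)..(x / (1 + x)), h ^ (κ - 1) / (1 - h)

/-- `𝓖(y;κ) = max {x ∈ [0,1] : 𝓕(x;κ) ≤ 1/y}`. -/
noncomputable def Gcal (y κ : ℝ) : ℝ := sSup {x ∈ Set.Icc (0:ℝ) 1 | Fcal x κ ≤ 1 / y}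

/-- `θ₁(δ) = 𝓖(2+δ;δ)`. -/
noncomputable def theta1 (δ : ℝ) : ℝ := Gcal (2 + δ) δ

/-- Pointwise monotonicity in the exponent. -/
lemma two_add_mul_rpow_anti {a b h : ℝ} (ha : 0 < a) (hab : a ≤ b) (h0 : 0 < h) (h2 : h ≤ 1 / 2) :
    (2 + b) * h ^ (b - 1) ≤ (2 + a) * h ^ (a - 1) := by
  have hsplit : h ^ (b - 1) = h ^ (a - 1) * h ^ (b - a) := by
    rw [← Real.rpow_add h0]; ring_nf
  have hlog : Real.log h ≤ -(1 / 2) := by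
    have h3 := Real.log_le_log h0 h2
    rw [one_div, Real.log_inv] at h3
    linarith [Real.log_two_gt_d9]
  have hpow : h ^ (b - a) ≤ Real.exp (-((b - a) / 2)) := by
    rw [Real.rpow_def_of_pos h0]
    apply Real.exp_le_exp.2
    nlinarith
  -- `(2 + b) / (2 + a) ≤ 1 + (b - a) / 2 ≤ exp ((b - a) / 2)`
  have hexp : 2 + b ≤ (2 + a) * Real.exp ((b - a) / 2) := by
    nlinarith [Real.add_one_le_exp ((b - a) / 2)]
  have hmain : (2 + b) * h ^ (b - a) ≤ 2 + a :=
    calc (2 + b) * h ^ (b - a)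
        ≤ ((2 + a) * Real.exp ((b - a) / 2)) * Real.exp (-((b - a) / 2)) := by
          gcongr
      _ = 2 + a := by rw [mul_assoc, ← Real.exp_add]; simp
  rw [hsplit]
  nlinarith [Real.rpow_pos_of_pos h0 (a - 1)]

lemma intervalIntegrable_integrand {a t : ℝ} (ha : 0 < a) (t0 : 0 ≤ t) (t2 : t ≤ 1 / 2) :
    IntervalIntegrable (fun h : ℝ => h ^ (a - 1) / (1 - h)) volume 0 t := by
  simp only [div_eq_mul_inv]
  refine (intervalIntegral.intervalIntegrable_rpow' (r := a - 1) (by linarith)).mul_continuousOn ?_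
  refine ContinuousOn.inv₀ (by fun_prop) fun h hh => ?_
  rw [Set.uIcc_of_le t0] at hh
  linarith [hh.2]

lemma two_add_mul_Fcal_anti {a b x : ℝ} (ha : 0 < a) (hab : a ≤ b) (hx : x ∈ Set.Icc (0:ℝ) 1) :
    (2 + b) * Fcal x b ≤ (2 + a) * Fcal x a := by
  have hx0 := hx.1
  have t0 : 0 ≤ x / (1 + x) := by positivity
  have t2 : x / (1 + x) ≤ 1 / 2 := by
    rw [div_le_div_iff₀ (by linarith) (by norm_num)]; linarith [hx.2]
  unfold Fcal
  rw [← intervalIntegral.integral_const_mul, ← intervalIntegral.integral_const_mul]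
  refine intervalIntegral.integral_mono_on_of_le_Ioo t0
    ((intervalIntegrable_integrand (by linarith) t0 t2).const_mul _)
    ((intervalIntegrable_integrand ha t0 t2).const_mul _) fun h hh => ?_
  have := two_add_mul_rpow_anti ha hab hh.1 (hh.2.le.trans t2)
  have h1 : 0 ≤ 1 - h := by linarith [hh.2]
  rw [← mul_div_assoc, ← mul_div_assoc]
  gcongr

/-- The function `θ₁(δ) = 𝓖(2+δ;δ)` is non-decreasing on `(0,2]`. -/
theorem stmt6 : MonotoneOn theta1 (Set.Ioc (0:ℝ) 2) := by
  intro a ha b hb hab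
  have ha0 := ha.1
  have hb0 := hb.1
  refine csSup_le_csSup ⟨1, fun x hx => hx.1.2⟩ ⟨0, by simp, ?_⟩ fun x hx => ⟨hx.1, ?_⟩
  · have : Fcal 0 a = 0 := by simp [Fcal]
    rw [this]; positivity
  · have h1 := hx.2
    rw [le_div_iff₀ (by linarith)] at h1 ⊢
    linarith [two_add_mul_Fcal_anti ha0 hab hx.1]
end

section
/- θ₁(δ) tends to 0 as δ → 0⁺; that is, for every ε > 0 there exists δ₀ > 0 such that 𝓖(2+δ; δ) ≤ ε for all δ ∈ (0, δ₀). -/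
/-! Since `1 / (1 - h) ≥ 1`, one has `𝓕(x;δ) ≥ u ^ δ / δ` with `u = x / (1 + x)`
(`rpow_div_le_Fcal`). If `x > ε`, then `u ≥ c := ε / (1 + ε)`, so
`u ^ δ ≥ c ^ δ ≥ 1 + δ log c`. For `δ < 1 / (1/2 - log c)` this exceeds `δ / 2`, so
`𝓕(x;δ) > 1/2 > 1 / (2 + δ)` and `x` is not in the set whose supremum is `𝓖(2+δ;δ)`. -/

open MeasureTheory

theorem rpow_div_le_Fcal {x δ : ℝ} (hx : 0 ≤ x) (hδ : 0 < δ) :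
    (x / (1 + x)) ^ δ / δ ≤ Fcal x δ := by
  have hu0 : 0 ≤ x / (1 + x) := by positivity
  have hu1 : x / (1 + x) < 1 := by rw [div_lt_one (by positivity)]; linarith
  set u := x / (1 + x) with hu
  have hint : IntervalIntegrable (fun h : ℝ => h ^ (δ - 1)) volume 0 u :=
    intervalIntegral.intervalIntegrable_rpow' (by linarith)
  have hint2 : IntervalIntegrable (fun h : ℝ => h ^ (δ - 1) / (1 - h)) volume 0 u := by
    simp only [div_eq_mul_inv]
    refine hint.mul_continuousOn (ContinuousOn.inv₀ (by fun_prop) fun h hh => ?_)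
    rw [Set.uIcc_of_le hu0] at hh
    linarith [hh.2]
  have hval : ∫ h in (0:ℝ)..u, h ^ (δ - 1) = u ^ δ / δ := by
    rw [integral_rpow (Or.inl (by linarith))]
    simp [Real.zero_rpow hδ.ne']
  rw [← hval, Fcal, ← hu]
  refine intervalIntegral.integral_mono_on hu0 hint hint2 fun h hh => ?_
  rw [le_div_iff₀ (by linarith [hh.2])]
  exact mul_le_of_le_one_right (Real.rpow_nonneg hh.1 _) (by linarith [hh.1])

/-- `θ₁(δ) = 𝓖(2+δ;δ)` tends to `0` as `δ → 0⁺`: for every `ε > 0` there exists `δ₀ > 0`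
such that `𝓖(2+δ;δ) ≤ ε` for all `δ ∈ (0,δ₀)`. -/
theorem stmt7 :
    ∀ ε : ℝ, 0 < ε → ∃ δ₀ : ℝ, 0 < δ₀ ∧ ∀ δ : ℝ, 0 < δ → δ < δ₀ → Gcal (2 + δ) δ ≤ ε := by
  intro ε hε
  have hc0 : 0 < ε / (1 + ε) := by positivity
  have hc1 : ε / (1 + ε) < 1 := by rw [div_lt_one (by positivity)]; linarith
  have hlog := Real.log_neg hc0 hc1
  refine ⟨1 / (1 / 2 - Real.log (ε / (1 + ε))), one_div_pos.2 (by linarith), fun δ hδ hδ₀ => ?_⟩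
  rw [lt_div_iff₀ (by linarith)] at hδ₀
  refine Real.sSup_le ?_ hε.le
  rintro x ⟨⟨hx0, -⟩, hF⟩
  by_contra! hx
  have hcu : ε / (1 + ε) ≤ x / (1 + x) := by
    rw [div_le_div_iff₀ (by positivity) (by positivity)]
    nlinarith
  have hpow : (ε / (1 + ε)) ^ δ ≤ (x / (1 + x)) ^ δ := Real.rpow_le_rpow hc0.le hcu hδ.le
  have hexp : 1 + δ * Real.log (ε / (1 + ε)) ≤ (ε / (1 + ε)) ^ δ := by
    rw [Real.rpow_def_of_pos hc0]
    linarith [Real.add_one_le_exp (Real.log (ε / (1 + ε)) * δ)]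
  have hle := (rpow_div_le_Fcal hx0 hδ).trans hF
  have hhalf : 1 / (2 + δ) ≤ 1 / 2 := one_div_le_one_div_of_le (by norm_num) (by linarith)
  have hsmall := hle.trans hhalf
  rw [div_le_iff₀ hδ] at hsmall
  linarith
end

section
/- The function θ₂ defined by θ₂(δ) = 𝓖((1+δ)²; 2δ+δ²) is non-decreasing on the interval (0, 1]. -/
/-!
With `κ = 2δ + δ²` one has `(1 + δ)² = 1 + κ`, so the set defining `θ₂(δ)` consists of the
`x ∈ [0,1]` with `(1 + κ) 𝓕(x;κ) ≤ 1`, and it suffices that `(1 + κ) 𝓕(x;κ)` is non-increasing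
in `κ`: the sets then grow with `δ`. Put `t = x/(1+x) ∈ [0,1/2]`. Integrating the derivative of
`h^κ/(1-h)` over `[0,t]` yields (`one_add_mul_integral`)

`(1 + κ) ∫₀ᵗ h^{κ-1}/(1-h) dh = t^κ/(1-t) + ∫₀ᵗ h^{κ-1} (1-2h)/(1-h)² dh`.

As `0 ≤ h ≤ t ≤ 1/2`, the factor `1 - 2h` is non-negative, so both terms on the right are
non-increasing in `κ`.
-/

open MeasureTheory

/-- `θ₂(δ) = 𝓖((1+δ)²; 2δ+δ²)`. -/
noncomputable def theta2 (δ : ℝ) : ℝ := Gcal ((1 + δ) ^ 2) (2 * δ + δ ^ 2)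

lemma intervalIntegrable_rpow_mul {κ t : ℝ} (hκ : 0 < κ) (ht0 : 0 ≤ t) {g : ℝ → ℝ}
    (hg : ContinuousOn g (Set.Icc 0 t)) :
    IntervalIntegrable (fun h => h ^ (κ - 1) * g h) volume 0 t := by
  apply (intervalIntegral.intervalIntegrable_rpow' (by linarith)).mul_continuousOn
  rwa [Set.uIcc_of_le ht0]

lemma continuousOn_weight {t : ℝ} (ht : t ≤ 1 / 2) :
    ContinuousOn (fun h : ℝ => (1 - 2 * h) / (1 - h) ^ 2) (Set.Icc 0 t) := by
  apply ContinuousOn.div (by fun_prop) (by fun_prop)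
  intro h hh
  have : 0 < 1 - h := by linarith [hh.2]
  positivity

/-- Integration by parts: the right-hand side is visibly non-increasing in `κ` for `t ≤ 1/2`. -/
lemma one_add_mul_integral {κ t : ℝ} (hκ : 0 < κ) (ht0 : 0 ≤ t) (ht : t ≤ 1 / 2) :
    (1 + κ) * ∫ h in (0:ℝ)..t, h ^ (κ - 1) / (1 - h) =
      t ^ κ / (1 - t) + ∫ h in (0:ℝ)..t, h ^ (κ - 1) * ((1 - 2 * h) / (1 - h) ^ 2) := by
  have hne : ∀ h ∈ Set.Icc 0 t, 1 - h ≠ 0 := fun h hh => by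
    have : 0 < 1 - h := by linarith [hh.2]
    exact this.ne'
  have hw := continuousOn_weight ht
  have hinv : ContinuousOn (fun h : ℝ => (1 - h)⁻¹) (Set.Icc 0 t) :=
    ContinuousOn.inv₀ (by fun_prop) hne
  have i1 := intervalIntegrable_rpow_mul hκ ht0 hinv
  have i2 := intervalIntegrable_rpow_mul hκ ht0 hw
  have key := intervalIntegral.integral_eq_sub_of_hasDerivAt_of_le ht0
    (f := fun h => h ^ κ / (1 - h))
    (f' := fun h => (1 + κ) * (h ^ (κ - 1) * (1 - h)⁻¹)
      - h ^ (κ - 1) * ((1 - 2 * h) / (1 - h) ^ 2))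
    (ContinuousOn.div (Real.continuous_rpow_const hκ.le).continuousOn (by fun_prop) hne)
    (fun h hh => by
      have h1 := hne h ⟨hh.1.le, hh.2.le⟩
      have hd := (Real.hasDerivAt_rpow_const (p := κ) (Or.inl hh.1.ne')).div
        ((hasDerivAt_id h).const_sub 1) h1
      refine hd.congr_deriv ?_
      have hp : h ^ κ = h ^ (κ - 1) * h := by
        rw [Real.rpow_sub_one hh.1.ne', div_mul_cancel₀ _ hh.1.ne']
      simp only [id, hp]
      field_simp
      ring)
    ((i1.const_mul _).sub i2)
  rw [intervalIntegral.integral_sub (i1.const_mul _) i2,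
    intervalIntegral.integral_const_mul, Real.zero_rpow hκ.ne'] at key
  have hdiv : (fun h : ℝ => h ^ (κ - 1) / (1 - h)) = fun h => h ^ (κ - 1) * (1 - h)⁻¹ :=
    funext fun h => div_eq_mul_inv _ _
  rw [hdiv]
  linarith

lemma one_add_mul_Fcal_anti {κ κ' x : ℝ} (hκ : 0 < κ) (hκκ' : κ ≤ κ')
    (hx : x ∈ Set.Icc (0:ℝ) 1) : (1 + κ') * Fcal x κ' ≤ (1 + κ) * Fcal x κ := by
  obtain ⟨hx0, hx1⟩ := hx
  unfold Fcal
  have ht0 : 0 ≤ x / (1 + x) := by positivity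
  have ht : x / (1 + x) ≤ 1 / 2 := by
    rw [div_le_div_iff₀ (by linarith) (by norm_num)]
    linarith
  generalize x / (1 + x) = t at ht0 ht
  have hκ' : 0 < κ' := by linarith
  rw [one_add_mul_integral hκ ht0 ht, one_add_mul_integral hκ' ht0 ht]
  have hw := continuousOn_weight ht
  apply add_le_add
  · apply div_le_div_of_nonneg_right _ (by linarith)
    exact Real.rpow_le_rpow_of_exponent_ge_of_imp ht0 (by linarith) hκκ' (by intros; linarith)
  · -- The open interval excludes `h = 0`, where `rpow` takes junk values.
    apply intervalIntegral.integral_mono_on_of_le_Ioo ht0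
      (intervalIntegrable_rpow_mul hκ' ht0 hw) (intervalIntegrable_rpow_mul hκ ht0 hw)
    intro h hh
    apply mul_le_mul_of_nonneg_right
    · exact Real.rpow_le_rpow_of_exponent_ge hh.1 (by linarith [hh.2]) (by linarith)
    · exact div_nonneg (by linarith [hh.2]) (sq_nonneg _)

/-- The function `θ₂` is non-decreasing on `(0,1]`. -/
theorem stmt11 : MonotoneOn theta2 (Set.Ioc (0:ℝ) 1) := by
  intro a ha b hb hab
  have ha0 := ha.1
  have hb0 := hb.1
  unfold theta2 Gcal
  apply csSup_le_csSup
  · exact ⟨1, fun x hx => hx.1.2⟩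
  · exact ⟨0, ⟨le_rfl, zero_le_one⟩, by simp [Fcal]; positivity⟩
  · rintro x ⟨hx, hF⟩
    refine ⟨hx, ?_⟩
    have hanti := one_add_mul_Fcal_anti (κ := 2 * a + a ^ 2) (κ' := 2 * b + b ^ 2)
      (by positivity) (by gcongr) hx
    rw [le_div_iff₀ (by positivity)] at hF ⊢
    linarith
end

section
/- For every δ ∈ [0.54, 1], one has θ₂(δ) = 1; equivalently, (1+δ)² · 𝓕(1; 2δ+δ²) ≤ 1 for all δ ∈ [0.54, 1]. -/
/-!
Put `κ = 2δ + δ²`, so that `(1+δ)² = κ + 1` and `κ ≥ 1.3716 > 15/11`. For fixed `h ∈ (0, 1/2]` the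
function `κ ↦ (κ+1) h^(κ-1)` is decreasing on `κ ≥ 15/11`, because its logarithmic derivative
`1/(κ+1) + log h` is at most `1/(κ+1) - log 2 < 0` (`weight_le`). Hence it suffices to bound
`(κ+1) 𝓕(1;κ)` at the single exponent `κ = 15/11`, where truncating the geometric series,
`1/(1-h) ≤ 1 + h + ⋯ + h⁶ + 2h⁷` on `[0, 1/2]`, gives an explicit integral
(`main_bound`); the power `2^(-15/11)` is bounded by the rational `0.3887`.
-/

open MeasureTheory

/-- Lowering the exponent `κ` to `15/11` increases `(κ+1) h^(κ-1)`. -/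
lemma weight_le {κ h : ℝ} (hκ : 15 / 11 ≤ κ) (h0 : 0 < h) (h1 : h ≤ 1 / 2) :
    (κ + 1) * h ^ (κ - 1) ≤ (26 / 11) * h ^ (4 / 11 : ℝ) := by
  have hlog : Real.log h ≤ -0.69 := by
    have h2 := Real.log_le_log h0 h1
    have h3 : Real.log (1 / 2 : ℝ) = -Real.log 2 := by
      rw [one_div, Real.log_inv]
    have h4 := Real.log_two_gt_d9
    norm_num at h2 h3 h4 ⊢
    linarith
  have hsplit : h ^ (κ - 1) = h ^ (κ - 15 / 11) * h ^ (4 / 11 : ℝ) := by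
    rw [← Real.rpow_add h0]
    congr 1
    ring
  have hp : 0 < h ^ (κ - 15 / 11) := Real.rpow_pos_of_pos h0 _
  -- `h ^ (-(κ - 15/11)) ≥ 1 - (κ - 15/11) log h`, from `exp t ≥ 1 + t`.
  have hexp : 1 + 0.69 * (κ - 15 / 11) ≤ (h ^ (κ - 15 / 11))⁻¹ := by
    rw [← Real.rpow_neg h0.le, Real.rpow_def_of_pos h0]
    have := Real.add_one_le_exp (Real.log h * -(κ - 15 / 11))
    nlinarith
  have hmul : (1 + 0.69 * (κ - 15 / 11)) * h ^ (κ - 15 / 11) ≤ 1 := by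
    calc _ ≤ (h ^ (κ - 15 / 11))⁻¹ * h ^ (κ - 15 / 11) := by gcongr
      _ = 1 := inv_mul_cancel₀ hp.ne'
  have hfac : (κ + 1) * h ^ (κ - 15 / 11) ≤ 26 / 11 := by
    have : κ + 1 ≤ 26 / 11 * (1 + 0.69 * (κ - 15 / 11)) := by linarith
    nlinarith
  rw [hsplit, ← mul_assoc]
  gcongr

/-- Truncated geometric series; the factor `2` bounds `1/(1-h)` in the remainder. -/
lemma inv_one_sub_le_sum {h : ℝ} (h0 : 0 < h) (h1 : h ≤ 1 / 2) :
    1 / (1 - h) ≤ ∑ n ∈ Finset.range 8, (if n = 7 then (2 : ℝ) else 1) * h ^ n := by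
  rw [div_le_iff₀ (by linarith)]
  simp only [Finset.sum_range_succ, Finset.sum_range_zero]
  norm_num
  have : 0 ≤ h ^ 7 * (1 - 2 * h) := mul_nonneg (by positivity) (by linarith)
  nlinarith

lemma half_rpow_le : (1 / 2 : ℝ) ^ (15 / 11 : ℝ) ≤ 0.3887 := by
  have h : ((1 / 2 : ℝ) ^ (15 / 11 : ℝ)) ^ 11 ≤ (0.3887 : ℝ) ^ 11 := by
    rw [← Real.rpow_natCast, ← Real.rpow_mul (by norm_num)]
    have : (15 / 11 : ℝ) * ((11 : ℕ) : ℝ) = ((15 : ℕ) : ℝ) := by norm_num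
    rw [this, Real.rpow_natCast]
    norm_num
  exact le_of_pow_le_pow_left₀ (by norm_num) (by norm_num) h

lemma main_bound {κ : ℝ} (hκ : 15 / 11 ≤ κ) : (κ + 1) * Fcal 1 κ ≤ 1 := by
  have hint : ∀ n ∈ Finset.range 8, IntervalIntegrable
      (fun h : ℝ => (26 / 11 * (if n = 7 then (2 : ℝ) else 1)) * h ^ (4 / 11 + n : ℝ))
      volume 0 (1 / 2) := fun n _ =>
    (intervalIntegral.intervalIntegrable_rpow'
      (by have : (0 : ℝ) ≤ n := n.cast_nonneg
          linarith)).const_mul _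
  have hF : (κ + 1) * Fcal 1 κ = ∫ h in (0:ℝ)..(1 / 2), (κ + 1) * (h ^ (κ - 1) / (1 - h)) := by
    rw [intervalIntegral.integral_const_mul, Fcal]
    norm_num
  have hmono : (κ + 1) * Fcal 1 κ ≤ ∫ h in (0:ℝ)..(1 / 2), ∑ n ∈ Finset.range 8,
      (26 / 11 * (if n = 7 then (2 : ℝ) else 1)) * h ^ (4 / 11 + n : ℝ) := by
    rw [hF]
    refine intervalIntegral.integral_mono_on_of_le_Ioo (by norm_num) ?_
      (by simpa only [Finset.sum_fn] using IntervalIntegrable.sum _ hint) ?_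
    · apply ContinuousOn.intervalIntegrable
      rw [Set.uIcc_of_le (by norm_num)]
      refine continuousOn_const.mul (ContinuousOn.div ?_ (by fun_prop) ?_)
      · exact (Real.continuous_rpow_const (by linarith)).continuousOn
      · intro x hx
        have := hx.2
        linarith
    · intro h hh
      have h1 := weight_le hκ hh.1 hh.2.le
      have h2 := inv_one_sub_le_sum hh.1 hh.2.le
      have hpos : 0 < 1 / (1 - h) := one_div_pos.2 (by linarith [hh.2])
      calc (κ + 1) * (h ^ (κ - 1) / (1 - h))
          = ((κ + 1) * h ^ (κ - 1)) * (1 / (1 - h)) := by ring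
        _ ≤ ((26 / 11) * h ^ (4 / 11 : ℝ)) *
            ∑ n ∈ Finset.range 8, (if n = 7 then (2 : ℝ) else 1) * h ^ n :=
          mul_le_mul h1 h2 hpos.le
            (mul_nonneg (by norm_num) (Real.rpow_nonneg hh.1.le _))
        _ = _ := by
          rw [Finset.mul_sum]
          refine Finset.sum_congr rfl fun n _ => ?_
          rw [Real.rpow_add hh.1, Real.rpow_natCast]
          ring
  have hval : ∀ n : ℕ, ∫ h in (0:ℝ)..(1 / 2), h ^ (4 / 11 + n : ℝ) =
      (1 / 2 : ℝ) ^ (15 / 11 : ℝ) * ((1 / 2) ^ n / (15 / 11 + n)) := by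
    intro n
    have hn : (0 : ℝ) ≤ n := n.cast_nonneg
    have he : (4 / 11 + n : ℝ) + 1 = 15 / 11 + n := by ring
    rw [integral_rpow (Or.inl (by linarith)), he, Real.zero_rpow (by positivity),
      Real.rpow_add (by norm_num), Real.rpow_natCast]
    ring
  refine hmono.trans ?_
  rw [intervalIntegral.integral_finsetSum hint]
  simp only [intervalIntegral.integral_const_mul, hval]
  have hc := half_rpow_le
  generalize (1 / 2 : ℝ) ^ (15 / 11 : ℝ) = c at hc
  simp only [Finset.sum_range_succ, Finset.sum_range_zero]
  norm_num at hc ⊢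
  linarith

/-- For every `δ ∈ [0.54, 1]` one has `θ₂(δ) = 1`; equivalently,
`(1+δ)² ⋅ 𝓕(1; 2δ+δ²) ≤ 1` for all such `δ`. -/
theorem stmt12 :
    ∀ δ ∈ Set.Icc (0.54:ℝ) 1,
      theta2 δ = 1 ∧ (1 + δ) ^ 2 * Fcal 1 (2 * δ + δ ^ 2) ≤ 1 := by
  rintro δ ⟨hδ, -⟩
  have hκ : 15 / 11 ≤ 2 * δ + δ ^ 2 := by
    norm_num at hδ
    nlinarith
  have hb : (1 + δ) ^ 2 * Fcal 1 (2 * δ + δ ^ 2) ≤ 1 := by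
    have := main_bound hκ
    rwa [show 2 * δ + δ ^ 2 + 1 = (1 + δ) ^ 2 by ring] at this
  refine ⟨?_, hb⟩
  have hpos : 0 < (1 + δ) ^ 2 := by nlinarith
  have hmax : IsGreatest
      {x ∈ Set.Icc (0:ℝ) 1 | Fcal x (2 * δ + δ ^ 2) ≤ 1 / (1 + δ) ^ 2} 1 :=
    ⟨⟨by simp, by rw [le_div_iff₀ hpos]; linarith⟩, fun x hx => hx.1.2⟩
  exact hmax.csSup_eq
end

section
/- Let U_ℓ denote the Chebyshev polynomials of the second kind. The function P(x) = 3·U₂(x/2) + 5·U₃(x/2) + 4·U₄(x/2) + U₅(x/2), which equals x⁵ + 4x⁴ + x³ − 9x² − 7x + 1, satisfies P(x) ≥ 1/3 for every x ∈ [−2, 0], and P(x) ≥ −10 for every x ∈ [−2, 2]. -/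
/-!
The Chebyshev identity follows from the three-term recurrence. Each lower bound comes from
dividing `P` by the square of a linear factor vanishing near the local minimum on the half-interval
(`-27/20` on `[-2, 0]` and `1` on `[0, 2]`): the quotient is nonnegative there, and the linear
remainder satisfies the bound.
-/

open Polynomial

/-- The combination `P(x) = 3·U₂(x/2) + 5·U₃(x/2) + 4·U₄(x/2) + U₅(x/2)` of Chebyshev
polynomials of the second kind equals `x⁵ + 4x⁴ + x³ - 9x² - 7x + 1`, and satisfies
`P(x) ≥ 1/3` on `[-2,0]` and `P(x) ≥ -10` on `[-2,2]`. -/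
theorem stmt13 (x : ℝ) :
    (3 * (Polynomial.Chebyshev.U ℝ 2).eval (x / 2) +
        5 * (Polynomial.Chebyshev.U ℝ 3).eval (x / 2) +
        4 * (Polynomial.Chebyshev.U ℝ 4).eval (x / 2) +
        (Polynomial.Chebyshev.U ℝ 5).eval (x / 2) =
      x ^ 5 + 4 * x ^ 4 + x ^ 3 - 9 * x ^ 2 - 7 * x + 1) ∧
    (x ∈ Set.Icc (-2:ℝ) 0 → (1:ℝ) / 3 ≤ x ^ 5 + 4 * x ^ 4 + x ^ 3 - 9 * x ^ 2 - 7 * x + 1) ∧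
    (x ∈ Set.Icc (-2:ℝ) 2 → (-10:ℝ) ≤ x ^ 5 + 4 * x ^ 4 + x ^ 3 - 9 * x ^ 2 - 7 * x + 1) := by
  have low : x ∈ Set.Icc (-2:ℝ) 0 →
      (1:ℝ) / 3 ≤ x ^ 5 + 4 * x ^ 4 + x ^ 3 - 9 * x ^ 2 - 7 * x + 1 := by
    rintro ⟨h1, h2⟩
    -- Division by `(x + 27/20)²`, as the local minimum on `[-2, 0]` lies near `-27/20`; the
    -- quotient `x (x² + 13/10 x - 1733/400) + 657/2000` is nonnegative because both factors of
    -- its first term are nonpositive. The remainder exceeds `1/3` on `[-2, 0]`.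
    have hquad : 0 ≤ 1733 / 400 - 13 / 10 * x - x ^ 2 := by nlinarith
    have hq : 0 ≤ -x * (1733 / 400 - 13 / 10 * x - x ^ 2) := mul_nonneg (by linarith) hquad
    have hprod : 0 ≤ (x + 27 / 20) ^ 2 *
        (-x * (1733 / 400 - 13 / 10 * x - x ^ 2) + 657 / 2000) :=
      mul_nonneg (sq_nonneg _) (by linarith)
    linarith
  refine ⟨?_, low, ?_⟩
  · have h3 : Polynomial.Chebyshev.U ℝ 3 = 2 * X * Polynomial.Chebyshev.U ℝ 2 -
        Polynomial.Chebyshev.U ℝ 1 := Polynomial.Chebyshev.U_add_two ℝ 1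
    have h4 : Polynomial.Chebyshev.U ℝ 4 = 2 * X * Polynomial.Chebyshev.U ℝ 3 -
        Polynomial.Chebyshev.U ℝ 2 := Polynomial.Chebyshev.U_add_two ℝ 2
    have h5 : Polynomial.Chebyshev.U ℝ 5 = 2 * X * Polynomial.Chebyshev.U ℝ 4 -
        Polynomial.Chebyshev.U ℝ 3 := Polynomial.Chebyshev.U_add_two ℝ 3
    simp only [h5, h4, h3, Polynomial.Chebyshev.U_two, Polynomial.Chebyshev.U_one, eval_sub,
      eval_mul, eval_pow, eval_X, eval_ofNat, eval_one]
    ring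
  · rintro ⟨h1, h2⟩
    rcases le_total x 0 with h | h
    · linarith [low ⟨h1, h⟩]
    · -- `P(x) + 10 = (x - 1)² (x³ + 6x² + 12x + 9) + (2 - x)`
      have hprod : 0 ≤ (x - 1) ^ 2 * (x ^ 3 + 6 * x ^ 2 + 12 * x + 9) := by positivity
      linarith
end
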